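/- Let α, β, z be real numbers with 0 < α < β. Then −z²/(2αβ) + 1 − (β·log β − α·log α)/(β − α) − log √(2π) ≤ log ∫_α^β (1/(β − α)) · (1/(√(2π)·σ)) · exp(−z²/(2σ²)) dσ. -/

import Mathlib

open Real MeasureTheory

/-!
The average of `1 / σ ^ 2` over `[α, β]` is `1 / (α * β)`, so the left-hand side is exactly the
average over `σ ∈ [α, β]` of the log-density at `z` of the centred Gaussian with standard deviation
`σ`. Jensen's inequality for `log` bounds it by the log of the averaged density.
-/

theorem average_log_le_log_average {X : Type*} [MeasurableSpace X] {μ : Measure X}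
    [IsFiniteMeasure μ] [NeZero μ] {f : X → ℝ} (hpos : ∀ᵐ x ∂μ, 0 < f x)
    (hf : Integrable f μ) (hlog : Integrable (fun x => log (f x)) μ) :
    ⨍ x, log (f x) ∂μ ≤ log (⨍ x, f x ∂μ) := by
  have exp_log_ae : (fun x => exp (log (f x))) =ᵐ[μ] f := hpos.mono fun x hx => exp_log hx
  have exp_average_le : exp (⨍ x, log (f x) ∂μ) ≤ ⨍ x, f x ∂μ := by
    rw [← average_congr exp_log_ae]
    exact convexOn_exp.map_average_le continuousOn_exp isClosed_univ (by simp) hlog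
      (hf.congr exp_log_ae.symm)
  exact (le_log_iff_exp_le ((exp_pos _).trans_le exp_average_le)).2 exp_average_le

theorem interval_average_log_le_log_interval_average {f : ℝ → ℝ} {a b : ℝ} (hab : a ≠ b)
    (hf : ContinuousOn f (Set.uIcc a b)) (hpos : ∀ x ∈ Set.uIcc a b, 0 < f x) :
    ⨍ x in a..b, log (f x) ≤ log (⨍ x in a..b, f x) := by
  have : IsFiniteMeasure (volume.restrict (Set.uIoc a b)) := ⟨by simp [Set.uIoc]⟩
  have : NeZero (volume.restrict (Set.uIoc a b)) := ⟨by
    simpa [Set.uIoc] using fun hba : b ≤ a => hba.lt_of_ne hab.symm⟩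
  have hlog : ContinuousOn (fun x => log (f x)) (Set.uIcc a b) :=
    hf.log fun x hx => (hpos x hx).ne'
  refine average_log_le_log_average ?_ hf.intervalIntegrable.def' hlog.intervalIntegrable.def'
  exact ae_restrict_of_forall_mem measurableSet_uIoc fun x hx => hpos x (Set.uIoc_subset_uIcc hx)

theorem integral_inv_sq {a b : ℝ} (h : (0 : ℝ) ∉ Set.uIcc a b) :
    ∫ x in a..b, (x ^ 2)⁻¹ = a⁻¹ - b⁻¹ := by
  calc ∫ x in a..b, (x ^ 2)⁻¹ = ∫ x in a..b, x ^ (-2 : ℤ) := by simp only [zpow_neg, zpow_ofNat]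
    _ = (b ^ (-1 : ℤ) - a ^ (-1 : ℤ)) / (-1) := by
      rw [integral_zpow (Or.inr ⟨by decide, h⟩)]; norm_num
    _ = a⁻¹ - b⁻¹ := by rw [zpow_neg_one, zpow_neg_one]; ring

section Gaussian

open ProbabilityTheory
open scoped NNReal

theorem log_gaussianPDFReal (m x : ℝ) {v : ℝ≥0} (hv : v ≠ 0) :
    log (gaussianPDFReal m v x) = -(x - m) ^ 2 / (2 * v) - log v / 2 - log (√(2 * π)) := by
  rw [gaussianPDFReal, log_mul (by positivity) (exp_pos _).ne', log_exp, log_inv,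
    sqrt_mul (by positivity), log_mul (by positivity) (by positivity), log_sqrt v.coe_nonneg]
  ring

theorem continuousOn_gaussianPDFReal_variance (m x : ℝ) :
    ContinuousOn (fun v => gaussianPDFReal m v x) {0}ᶜ := by
  have sqrt_ne_zero : ∀ v ∈ ({0}ᶜ : Set ℝ≥0), √(2 * π * v) ≠ 0 := fun v hv => by
    have : v ≠ 0 := hv
    positivity
  have two_mul_ne_zero : ∀ v ∈ ({0}ᶜ : Set ℝ≥0), (2 * v : ℝ) ≠ 0 := fun v hv =>
    mul_ne_zero two_ne_zero (NNReal.coe_ne_zero.2 hv)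
  unfold gaussianPDFReal
  fun_prop (disch := assumption)

theorem gaussianPDFReal_toNNReal_sq (m x : ℝ) {σ : ℝ} (hσ : 0 < σ) :
    gaussianPDFReal m (σ.toNNReal ^ 2) x =
      1 / (√(2 * π) * σ) * exp (-(x - m) ^ 2 / (2 * σ ^ 2)) := by
  rw [gaussianPDFReal, NNReal.coe_pow, coe_toNNReal σ hσ.le, sqrt_mul (by positivity),
    sqrt_sq hσ.le, one_div]

theorem log_gaussianPDFReal_toNNReal_sq (m x : ℝ) {σ : ℝ} (hσ : 0 < σ) :
    log (gaussianPDFReal m (σ.toNNReal ^ 2) x) =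
      -(x - m) ^ 2 / 2 * (σ ^ 2)⁻¹ - log σ - log (√(2 * π)) := by
  rw [log_gaussianPDFReal m x (pow_ne_zero 2 (toNNReal_pos.2 hσ).ne'), NNReal.coe_pow,
    coe_toNNReal σ hσ.le, log_pow]
  push_cast
  ring

variable {a b : ℝ}

theorem interval_average_log_gaussianPDFReal (m x : ℝ) (ha : 0 < a) (hb : 0 < b) (hab : a ≠ b) :
    ⨍ σ in a..b, log (gaussianPDFReal m (σ.toNNReal ^ 2) x) =
      -(x - m) ^ 2 / (2 * a * b) + 1 - (b * log b - a * log a) / (b - a) - log (√(2 * π)) := by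
  have hpos : ∀ σ ∈ Set.uIcc a b, 0 < σ := fun σ hσ => (lt_min ha hb).trans_le hσ.1
  have h0 : (0 : ℝ) ∉ Set.uIcc a b := fun h => (hpos 0 h).false
  have hba : b - a ≠ 0 := sub_ne_zero.2 hab.symm
  have log_density : Set.EqOn (fun σ => log (gaussianPDFReal m (σ.toNNReal ^ 2) x))
      (fun σ => -(x - m) ^ 2 / 2 * (σ ^ 2)⁻¹ - log σ - log (√(2 * π))) (Set.uIcc a b) :=
    fun σ hσ => log_gaussianPDFReal_toNNReal_sq m x (hpos σ hσ)
  have inv_sq_integrable : IntervalIntegrable (fun σ : ℝ => (σ ^ 2)⁻¹) volume a b :=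
    ContinuousOn.intervalIntegrable <| (continuousOn_pow 2).inv₀ fun σ hσ =>
      (pow_pos (hpos σ hσ) 2).ne'
  rw [interval_average_eq_div, intervalIntegral.integral_congr log_density,
    intervalIntegral.integral_sub ((inv_sq_integrable.const_mul _).sub
      intervalIntegral.intervalIntegrable_log') intervalIntegrable_const,
    intervalIntegral.integral_sub (inv_sq_integrable.const_mul _)
      intervalIntegral.intervalIntegrable_log',
    intervalIntegral.integral_const_mul, integral_inv_sq h0, integral_log,
    intervalIntegral.integral_const, smul_eq_mul]
  field_simp
  ring

theorem interval_average_log_gaussianPDFReal_le (m x : ℝ) (ha : 0 < a) (hb : 0 < b)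
    (hab : a ≠ b) :
    ⨍ σ in a..b, log (gaussianPDFReal m (σ.toNNReal ^ 2) x) ≤
      log (⨍ σ in a..b, gaussianPDFReal m (σ.toNNReal ^ 2) x) := by
  have variance_ne_zero : ∀ σ ∈ Set.uIcc a b, σ.toNNReal ^ 2 ≠ 0 := fun σ hσ =>
    pow_ne_zero 2 (toNNReal_pos.2 ((lt_min ha hb).trans_le hσ.1)).ne'
  refine interval_average_log_le_log_interval_average hab ?_ fun σ hσ =>
    gaussianPDFReal_pos m _ x (variance_ne_zero σ hσ)
  exact (continuousOn_gaussianPDFReal_variance m x).comp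
    (continuous_real_toNNReal.pow 2).continuousOn variance_ne_zero

theorem interval_average_gaussianPDFReal (m x : ℝ) (ha : 0 < a) (hb : 0 < b) :
    ⨍ σ in a..b, gaussianPDFReal m (σ.toNNReal ^ 2) x =
      ∫ σ in a..b, (1 / (b - a)) * (1 / (√(2 * π) * σ)) * exp (-(x - m) ^ 2 / (2 * σ ^ 2)) := by
  rw [interval_average_eq, smul_eq_mul, ← intervalIntegral.integral_const_mul]
  refine intervalIntegral.integral_congr fun σ hσ => ?_
  simp only [gaussianPDFReal_toNNReal_sq m x ((lt_min ha hb).trans_le hσ.1), one_div, mul_assoc]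

end Gaussian

/-- Per-dimension combination of the exact identity and the Jensen step in the
proof of Theorem 1: the closed-form expression is bounded above by the log
marginal density of `z` under the hierarchical model with standard deviation
uniform on `[α, β]`. -/
theorem per_dim_lower_bound (α β z : ℝ) (hα : 0 < α) (hαβ : α < β) :
    -z ^ 2 / (2 * α * β) + 1 - (β * Real.log β - α * Real.log α) / (β - α)
        - Real.log (Real.sqrt (2 * π)) ≤
      Real.log (∫ σ in α..β,
        (1 / (β - α)) * (1 / (Real.sqrt (2 * π) * σ)) *
          Real.exp (-z ^ 2 / (2 * σ ^ 2))) := by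
  have hβ : 0 < β := hα.trans hαβ
  have jensen := interval_average_log_gaussianPDFReal_le 0 z hα hβ hαβ.ne
  rwa [interval_average_log_gaussianPDFReal 0 z hα hβ hαβ.ne,
    interval_average_gaussianPDFReal 0 z hα hβ, sub_zero] at jensen
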